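/- Let m ∈ ℕ with m ≥ 1, let a₁,…,a_m ∈ ℕ, and let A ⊆ ℕ. Then: (1) there exist functions α : 𝒫_f(ℕ^ℕ) → ℕ and H : 𝒫_f(ℕ^ℕ) → 𝒫_f(ℕ) such that (a) whenever F ⊊ G in 𝒫_f(ℕ^ℕ), max H(F) < min H(G), and (b) whenever G₁ ⊊ G₂ ⊊ ⋯ is an infinite strictly increasing chain in 𝒫_f(ℕ^ℕ), f_i ∈ G_i for each i ∈ ℕ, and β₁ < ⋯ < β_m are in 𝒫_f(ℕ), then Σ_{l=1}^m a_l·(Σ_{i∈β_l}(α(G_i) + Σ_{t∈H(G_i)}f_i(t))) ∈ A — if and only if there exists an idempotent ultrafilter p ∈ 𝒥 such that A ∈ a₁·p + ⋯ + a_m·p; and (2) there exist functions α₁,…,α_m : 𝒫_f(ℕ^ℕ) → ℕ and H₁,…,H_m : 𝒫_f(ℕ^ℕ) → 𝒫_f(ℕ) satisfying (a) for each H_l and such that, under the hypotheses of (b), Σ_{l=1}^m a_l·(Σ_{i∈β_l}(α_l(G_i) + Σ_{t∈H_l(G_i)}f_i(t))) ∈ A — if and only if there exist idempotent ultrafilters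 p₁,…,p_m ∈ 𝒥 such that A ∈ a₁·p₁ + ⋯ + a_m·p_m. -/

import Mathlib

namespace MultiCST

/-- The sum `p + q` of ultrafilters on ℕ: `A ∈ p + q` iff `{x : {y : x+y ∈ A} ∈ q} ∈ p`. -/
def uAdd (p q : Ultrafilter ℕ) : Ultrafilter ℕ :=
  p.bind fun x => q.map fun y => x + y

/-- `A ⊆ ℕ` is a J-set. -/
def IsJSet (A : Set ℕ) : Prop :=
  ∀ F : Finset (ℕ → ℕ), F.Nonempty →
    ∃ (a : ℕ) (β : Finset ℕ), β.Nonempty ∧ ∀ f ∈ F, a + ∑ t ∈ β, f t ∈ A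

/-- `p ∈ 𝒥`: every member of `p` is a J-set. -/
def MemJ (p : Ultrafilter ℕ) : Prop := ∀ A : Set ℕ, A ∈ p → IsJSet A

/-- `p` is an idempotent ultrafilter. -/
def IdempotentUF (p : Ultrafilter ℕ) : Prop := uAdd p p = p

/-- `p` is a minimal idempotent ultrafilter. -/
def IsMinimalIdempotent (p : Ultrafilter ℕ) : Prop :=
  IdempotentUF p ∧
    ∀ q : Ultrafilter ℕ, IdempotentUF q → uAdd q p = q → uAdd p q = q → q = p

/-- Tensor product `⊗_{i=1}^m p_i` of ultrafilters on ℕ, as an ultrafilter on `Fin m → ℕ`. -/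
def tensor : ∀ m : ℕ, (Fin m → Ultrafilter ℕ) → Ultrafilter (Fin m → ℕ)
  | 0, _ => pure fun i => i.elim0
  | m + 1, p =>
      (p 0).bind fun x => (tensor m fun i => p i.succ).map fun v => Fin.cons x v

/-- `f : ℕ → ℕ` is (given by) a polynomial with coefficients in ℕ and zero constant term. -/
def IsPolyZeroConst (f : ℕ → ℕ) : Prop :=
  ∃ P : Polynomial ℕ, P.coeff 0 = 0 ∧ ∀ x, f x = P.eval x

/-- The linear combination `a₁·p₁ + a₂·p₂ + ⋯ + a_m·p_m` of ultrafilters on ℕ. -/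
def linComb : ∀ m : ℕ, (Fin m → ℕ) → (Fin m → Ultrafilter ℕ) → Ultrafilter ℕ
  | 0, _, _ => pure 0
  | m + 1, a, p =>
      uAdd ((p 0).map fun x => a 0 * x)
        (linComb m (fun i => a i.succ) fun i => p i.succ)

section Aux

open Filter

/-! ### Basic facts on ultrafilters -/

theorem mem_uAdd {p q : Ultrafilter ℕ} {A : Set ℕ} :
    A ∈ uAdd p q ↔ ∀ᶠ x in (p : Filter ℕ), ∀ᶠ y in (q : Filter ℕ), x + y ∈ A := Iff.rfl

theorem mem_linComb_succ {m : ℕ} {a : Fin (m + 1) → ℕ} {p : Fin (m + 1) → Ultrafilter ℕ}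
    {A : Set ℕ} :
    A ∈ linComb (m + 1) a p ↔
      ∀ᶠ x in (p 0 : Filter ℕ), {y | a 0 * x + y ∈ A} ∈
        linComb m (fun i => a i.succ) fun i => p i.succ := Iff.rfl

theorem MemJ.add {p q : Ultrafilter ℕ} (hq : MemJ q) : MemJ (uAdd p q) := by
  intro A hA
  obtain ⟨x, hx⟩ := (mem_uAdd.1 hA).exists
  intro F hF
  obtain ⟨a, β, hβ, h⟩ := hq _ hx F hF
  refine ⟨x + a, β, hβ, fun f hf => ?_⟩
  have := h f hf
  rw [add_assoc]
  exact this

/-! ### Partition regularity of J-sets -/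

theorem IsJSet.mono {A B : Set ℕ} (h : A ⊆ B) (hA : IsJSet A) : IsJSet B := by
  intro F hF
  obtain ⟨a, β, hβ, h'⟩ := hA F hF
  exact ⟨a, β, hβ, fun f hf => h (h' f hf)⟩

theorem isJSet_union {A B : Set ℕ} (h : IsJSet (A ∪ B)) : IsJSet A ∨ IsJSet B := by
  classical
  by_contra hcon
  rw [not_or] at hcon
  obtain ⟨hA, hB⟩ := hcon
  unfold IsJSet at hA hB
  push Not at hA hB
  obtain ⟨F₁, hF₁, h₁⟩ := hA
  obtain ⟨F₂, hF₂, h₂⟩ := hB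
  obtain ⟨ι, _, hι⟩ := Combinatorics.Line.exists_mono_in_high_dimension
    {f // f ∈ F₁ ∪ F₂} Prop
  obtain ⟨e, he⟩ := Countable.exists_injective_nat (ι × ℕ)
  obtain ⟨f₀, hf₀⟩ := hF₁
  let g : (ι → {f // f ∈ F₁ ∪ F₂}) → ℕ → ℕ := fun w t => ∑ i, (w i).1 (e (i, t))
  obtain ⟨a, β, hβ, hab⟩ := h (Finset.univ.image g)
    ⟨_, Finset.mem_image_of_mem g (Finset.mem_univ fun _ => ⟨f₀, Finset.mem_union_left _ hf₀⟩)⟩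
  obtain ⟨l, c, hl⟩ := hι fun w => a + ∑ t ∈ β, g w t ∈ A
  let V : Finset ι := Finset.univ.filter fun i => l.idxFun i = none
  let a' : ℕ := a + ∑ t ∈ β, ∑ i ∈ Finset.univ.filter (fun i => ¬ l.idxFun i = none),
    (l ⟨f₀, Finset.mem_union_left _ hf₀⟩ i).1 (e (i, t))
  let β' : Finset ℕ := (V ×ˢ β).image e
  have hβ' : β'.Nonempty := by
    obtain ⟨i, hi⟩ := l.proper
    refine Finset.Nonempty.image (Finset.Nonempty.product ⟨i, ?_⟩ hβ) _
    simp [V, hi]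
  have key : ∀ f (hf : f ∈ F₁ ∪ F₂), a' + ∑ t ∈ β', f t = a + ∑ t ∈ β, g (l ⟨f, hf⟩) t := by
    intro f hf
    have e1 : ∑ t ∈ β', f t = ∑ t ∈ β, ∑ i ∈ V, f (e (i, t)) := by
      rw [Finset.sum_image (fun _ _ _ _ h => he h), Finset.sum_product_right]
    rw [e1, add_assoc, ← Finset.sum_add_distrib]
    congr 1
    refine Finset.sum_congr rfl fun t _ => ?_
    simp only [g]
    rw [← Finset.sum_filter_add_sum_filter_not Finset.univ (fun i => l.idxFun i = none), add_comm]
    congr 1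
    · refine Finset.sum_congr rfl fun i hi => ?_
      have : l.idxFun i = none := by simpa [V] using hi
      simp [this]
    · refine Finset.sum_congr rfl fun i hi => ?_
      have : ¬ l.idxFun i = none := by simpa using hi
      obtain ⟨y, hy⟩ := Option.ne_none_iff_exists'.1 this
      simp [hy]
  by_cases hc : c
  · obtain ⟨f, hf, hn⟩ := h₁ a' β' hβ'
    have hf' := Finset.mem_union_left F₂ hf
    rw [key f hf'] at hn
    have := hl ⟨f, hf'⟩
    exact hn (this.symm.mp hc)
  · obtain ⟨f, hf, hn⟩ := h₂ a' β' hβ'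
    have hf' := Finset.mem_union_right F₁ hf
    rw [key f hf'] at hn
    have h3 := hab _ (Finset.mem_image_of_mem g (Finset.mem_univ (l ⟨f, hf'⟩)))
    have h4 := hl ⟨f, hf'⟩
    rcases h3 with h3 | h3
    · exact hc (h4.mp h3)
    · exact hn h3

/-- The filter of complements of non-J-sets. -/
def jFilter : Filter ℕ where
  sets := {C | ¬ IsJSet Cᶜ}
  univ_sets := by
    intro h
    obtain ⟨a, β, _, h'⟩ := h {fun _ => 0} ⟨_, Finset.mem_singleton_self _⟩
    have := h' _ (Finset.mem_singleton_self _)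
    simp at this
  sets_of_superset := by
    intro x y hx hxy h
    exact hx (h.mono (Set.compl_subset_compl.2 hxy))
  inter_sets := by
    intro x y hx hy h
    rw [Set.compl_inter] at h
    rcases isJSet_union h with h | h
    · exact hx h
    · exact hy h

/-! ### Sums along chains -/

/-- The summand attached to the set `G` and the function `f`. -/
def term (α : Finset (ℕ → ℕ) → ℕ) (H : Finset (ℕ → ℕ) → Finset ℕ)
    (G : Finset (ℕ → ℕ)) (f : ℕ → ℕ) : ℕ := α G + ∑ t ∈ H G, f t

/-- `ChainSum α H F K x`: `x` is a sum along a chain strictly above `F` that ends in `K`. -/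
inductive ChainSum (α : Finset (ℕ → ℕ) → ℕ) (H : Finset (ℕ → ℕ) → Finset ℕ)
    (F : Finset (ℕ → ℕ)) : Finset (ℕ → ℕ) → ℕ → Prop
  | one (G : Finset (ℕ → ℕ)) (f : ℕ → ℕ) : F ⊂ G → f ∈ G → ChainSum α H F G (term α H G f)
  | snoc (G K : Finset (ℕ → ℕ)) (x : ℕ) (f : ℕ → ℕ) : ChainSum α H F G x → G ⊂ K → f ∈ K →
      ChainSum α H F K (x + term α H K f)

variable {α : Finset (ℕ → ℕ) → ℕ} {H : Finset (ℕ → ℕ) → Finset ℕ}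

theorem ChainSum.ssub {F K : Finset (ℕ → ℕ)} {x : ℕ} (h : ChainSum α H F K x) : F ⊂ K := by
  induction h with
  | one G f h _ => exact h
  | snoc G K x f _ h _ ih => exact ih.trans h

theorem ChainSum.trans {F G K : Finset (ℕ → ℕ)} {x y : ℕ} (h : ChainSum α H F G x)
    (h' : ChainSum α H G K y) : ChainSum α H F K (x + y) := by
  induction h' with
  | one K f h1 h2 => exact .snoc _ _ _ _ h h1 h2
  | snoc K K' y f h0 h1 h2 ih => rw [← add_assoc]; exact .snoc _ _ _ _ ih h1 h2

theorem ChainSum.weaken {F F' K : Finset (ℕ → ℕ)} {x : ℕ} (hF : F' ⊆ F)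
    (h : ChainSum α H F K x) : ChainSum α H F' K x := by
  induction h with
  | one G f h h2 => exact .one _ _ (hF.trans_ssubset h) h2
  | snoc G K x f _ h h2 ih => exact .snoc _ _ _ _ ih h h2

/-- All sums along chains strictly above `F`. -/
def chainSet (α : Finset (ℕ → ℕ) → ℕ) (H : Finset (ℕ → ℕ) → Finset ℕ)
    (F : Finset (ℕ → ℕ)) : Set ℕ := {x | ∃ K, ChainSum α H F K x}

theorem exists_ssuperset (F : Finset (ℕ → ℕ)) : ∃ G, F ⊂ G := by
  classical
  obtain ⟨f, hf⟩ := Infinite.exists_notMem_finset F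
  exact ⟨insert f F, Finset.ssubset_insert hf⟩

theorem isJSet_chainSet (hH : ∀ F : Finset (ℕ → ℕ), F.Nonempty → (H F).Nonempty)
    (F : Finset (ℕ → ℕ)) : IsJSet (chainSet α H F) := by
  classical
  intro F' hF'
  obtain ⟨G, hG⟩ := exists_ssuperset (F ∪ F')
  have h1 : F ⊂ G := Finset.subset_union_left.trans_ssubset hG
  have h2 : F' ⊆ G := Finset.subset_union_right.trans hG.subset
  exact ⟨α G, H G, hH _ (hF'.mono h2), fun f hf => ⟨G, .one G f h1 (h2 hf)⟩⟩

theorem exists_idempotent_chainSet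
    (hH : ∀ F : Finset (ℕ → ℕ), F.Nonempty → (H F).Nonempty) :
    ∃ p : Ultrafilter ℕ, IdempotentUF p ∧ MemJ p ∧ ∀ F, chainSet α H F ∈ p := by
  classical
  let S : Set (Ultrafilter ℕ) := {p | MemJ p ∧ ∀ F, chainSet α H F ∈ p}
  have hcl : IsClosed S := by
    have : S = (⋂ (A : Set ℕ) (_ : ¬ IsJSet A), {p : Ultrafilter ℕ | A ∈ p}ᶜ) ∩
        ⋂ F, {p : Ultrafilter ℕ | chainSet α H F ∈ p} := by
      ext p
      simp only [S, MemJ, Set.mem_ofPred_eq, Set.mem_inter_iff, Set.mem_iInter, Set.mem_compl_iff]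
      refine and_congr_left fun _ => forall_congr' fun A => ?_
      tauto
    rw [this]
    refine IsClosed.inter ?_ ?_
    · exact isClosed_iInter fun A => isClosed_iInter fun _ =>
        (ultrafilter_isOpen_basic A).isClosed_compl
    · exact isClosed_iInter fun F => ultrafilter_isClosed_basic _
  have hne : S.Nonempty := by
    have hd : Directed (· ≥ ·) fun F : Finset (ℕ → ℕ) => 𝓟 (chainSet α H F) ⊓ jFilter := by
      intro F G
      refine ⟨F ∪ G, ?_, ?_⟩
      · refine inf_le_inf_right _ (principal_mono.2 ?_)
        rintro x ⟨K, hK⟩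
        exact ⟨K, hK.weaken Finset.subset_union_left⟩
      · refine inf_le_inf_right _ (principal_mono.2 ?_)
        rintro x ⟨K, hK⟩
        exact ⟨K, hK.weaken Finset.subset_union_right⟩
    have hnb : (⨅ F : Finset (ℕ → ℕ), 𝓟 (chainSet α H F) ⊓ jFilter).NeBot := by
      refine iInf_neBot_of_directed' hd fun F => ?_
      rw [inf_comm, inf_principal_neBot_iff]
      intro U hU
      by_contra hemp
      rw [Set.not_nonempty_iff_eq_empty] at hemp
      apply (hU : ¬ IsJSet Uᶜ)
      refine (isJSet_chainSet (α := α) hH F).mono ?_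
      intro x hx hxU
      have : x ∈ U ∩ chainSet α H F := ⟨hxU, hx⟩
      rw [hemp] at this
      exact this
    let p := Ultrafilter.of (⨅ F : Finset (ℕ → ℕ), 𝓟 (chainSet α H F) ⊓ jFilter)
    have hp : ∀ F, (p : Filter ℕ) ≤ 𝓟 (chainSet α H F) ⊓ jFilter := fun F =>
      (Ultrafilter.of_le _).trans (iInf_le _ F)
    refine ⟨p, ?_, fun F => ?_⟩
    · intro A hA
      by_contra hn
      have h1 : Aᶜ ∈ jFilter := by
        show ¬ IsJSet Aᶜᶜ
        rwa [compl_compl]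
      have h2 : Aᶜ ∈ p := ((hp ∅).trans inf_le_right) h1
      exact Ultrafilter.compl_mem_iff_notMem.1 h2 hA
    · exact ((hp F).trans inf_le_left) (mem_principal_self _)
  let _ : AddSemigroup (Ultrafilter ℕ) := Ultrafilter.addSemigroup
  obtain ⟨p, hp, hpp⟩ := exists_idempotent_in_compact_add_subsemigroup
    (M := Ultrafilter ℕ) Ultrafilter.continuous_add_left S hne hcl.isCompact (by
      intro p hp q hq
      refine ⟨(MemJ.add hq.1 : MemJ (uAdd p q)), fun F => ?_⟩
      show chainSet α H F ∈ uAdd p q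
      rw [mem_uAdd]
      filter_upwards [hp.2 F] with x hx
      obtain ⟨K, hK⟩ := hx
      filter_upwards [hq.2 K] with y hy
      obtain ⟨K', hK'⟩ := hy
      exact ⟨K', hK.trans hK'⟩)
  exact ⟨p, hpp, hp.1, hp.2⟩

/-! ### From chains to linear combinations -/

theorem linComb_of_step (m : ℕ) (a : Fin m → ℕ) (p : Fin m → Ultrafilter ℕ)
    (Q : ℕ → ℕ → Prop)
    (hQ : ∀ (k : Fin m) s, Q k s → ∀ᶠ x in (p k : Filter ℕ), Q (k + 1) (s + a k * x))
    (s : ℕ) (hs : Q 0 s) : {x | Q m (s + x)} ∈ linComb m a p := by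
  induction m generalizing Q s with
  | zero => exact hs
  | succ m ih =>
    rw [mem_linComb_succ]
    filter_upwards [hQ 0 s hs] with x hx
    have := ih (fun i => a i.succ) (fun i => p i.succ) (fun k => Q (k + 1))
      (fun k t ht => by simpa using hQ k.succ t (by simpa using ht)) (s + a 0 * x)
      (by simpa using hx)
    simpa [add_assoc] using this

/-- A finite chain of length `n` below `K`, with selected elements. -/
def IsChainTo (n : ℕ) (G : ℕ → Finset (ℕ → ℕ)) (f : ℕ → ℕ → ℕ) (K : Finset (ℕ → ℕ)) : Prop :=
  (∀ i < n, f i ∈ G i) ∧ (∀ i j, i < j → j < n → G i ⊂ G j) ∧ ∀ i < n, G i ⊆ K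

theorem IsChainTo.extend {n : ℕ} {G : ℕ → Finset (ℕ → ℕ)} {f : ℕ → ℕ → ℕ}
    {K K' : Finset (ℕ → ℕ)} (h : IsChainTo n G f K) (hK : K ⊂ K') {g : ℕ → ℕ} (hg : g ∈ K') :
    IsChainTo (n + 1) (Function.update G n K') (Function.update f n g) K' := by
  obtain ⟨h1, h2, h3⟩ := h
  refine ⟨fun i hi => ?_, fun i j hij hj => ?_, fun i hi => ?_⟩
  · rcases Nat.lt_succ_iff_lt_or_eq.1 hi with hi | rfl
    · simpa [hi.ne] using h1 i hi
    · simpa using hg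
  · rcases Nat.lt_succ_iff_lt_or_eq.1 hj with hj | rfl
    · simpa [hj.ne, (hij.trans hj).ne] using h2 i j hij hj
    · simpa [hij.ne] using (h3 i hij).trans_ssubset hK
  · rcases Nat.lt_succ_iff_lt_or_eq.1 hi with hi | rfl
    · simpa [hi.ne] using (h3 i hi).trans hK.subset
    · simp

theorem ChainSum.exists_chain {K K' : Finset (ℕ → ℕ)} {x : ℕ} (h : ChainSum α H K K' x)
    {n : ℕ} {G : ℕ → Finset (ℕ → ℕ)} {f : ℕ → ℕ → ℕ} (hc : IsChainTo n G f K) :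
    ∃ (n' : ℕ) (G' : ℕ → Finset (ℕ → ℕ)) (f' : ℕ → ℕ → ℕ) (b : Finset ℕ),
      n ≤ n' ∧ IsChainTo n' G' f' K' ∧ (∀ i < n, G' i = G i ∧ f' i = f i) ∧ b.Nonempty ∧
      (∀ i ∈ b, n ≤ i ∧ i < n') ∧ ∑ i ∈ b, term α H (G' i) (f' i) = x := by
  classical
  induction h with
  | one K' g h1 h2 =>
    refine ⟨n + 1, _, _, {n}, by omega, hc.extend h1 h2, fun i hi => ?_, by simp, by simp, by simp⟩
    simp [hi.ne]
  | snoc K' K'' x g h0 h1 h2 ih =>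
    obtain ⟨n', G', f', b, hn, hc', hag, hb, hb', hsum⟩ := ih
    refine ⟨n' + 1, _, _, insert n' b, by omega, hc'.extend h1 h2, fun i hi => ?_, by simp,
      fun i hi => ?_, ?_⟩
    · have : i ≠ n' := by omega
      simpa [this] using hag i hi
    · rcases Finset.mem_insert.1 hi with rfl | hi
      · omega
      · have := hb' i hi
        omega
    · have hnb : n' ∉ b := fun h => (lt_irrefl _ (hb' _ h).2)
      rw [Finset.sum_insert hnb, add_comm]
      congr 1
      · rw [← hsum]
        refine Finset.sum_congr rfl fun i hi => ?_
        have : i ≠ n' := (hb' i hi).2.ne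
        simp [this]
      · simp

theorem exists_strict_chain (K : Finset (ℕ → ℕ)) :
    ∃ E : ℕ → Finset (ℕ → ℕ), (∀ i, K ⊂ E i) ∧ ∀ i j, i < j → E i ⊂ E j := by
  choose nx hnx using exists_ssuperset
  let E : ℕ → Finset (ℕ → ℕ) := fun n => nx^[n + 1] K
  have hE : StrictMono E := strictMono_nat_of_lt_succ fun n => by
    simp only [E, Function.iterate_succ_apply' nx (n + 1)]
    exact hnx _
  refine ⟨E, fun i => ?_, fun i j h => hE h⟩
  exact lt_of_lt_of_le (show K < E 0 from hnx K) (hE.monotone (Nat.zero_le i))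

theorem IsChainTo.exists_infinite {n : ℕ} {G : ℕ → Finset (ℕ → ℕ)} {f : ℕ → ℕ → ℕ}
    {K : Finset (ℕ → ℕ)} (hc : IsChainTo n G f K) :
    ∃ (G' : ℕ → Finset (ℕ → ℕ)) (f' : ℕ → ℕ → ℕ), (∀ i j, i < j → G' i ⊂ G' j) ∧
      (∀ i, f' i ∈ G' i) ∧ ∀ i < n, G' i = G i ∧ f' i = f i := by
  classical
  obtain ⟨E, hE1, hE2⟩ := exists_strict_chain K
  obtain ⟨h1, h2, h3⟩ := hc
  have hne : ∀ i, ∃ g, g ∈ E i := fun i => by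
    obtain ⟨g, hg, _⟩ := Finset.exists_of_ssubset (hE1 i)
    exact ⟨g, hg⟩
  choose g hg using hne
  refine ⟨fun i => if i < n then G i else E i, fun i => if i < n then f i else g i,
    fun i j hij => ?_, fun i => ?_, fun i hi => by simp [hi]⟩
  · by_cases hj : j < n
    · simpa [hj, hij.trans hj] using h2 i j hij hj
    · by_cases hi : i < n
      · simpa [hi, hj] using (h3 i hi).trans_ssubset (hE1 j)
      · simpa [hi, hj] using hE2 i j hij
  · by_cases hi : i < n
    · simpa [hi] using h1 i hi
    · simpa [hi] using hg i

theorem mem_linComb_of_chain (m : ℕ) (a : Fin m → ℕ) (A : Set ℕ)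
    (α : Fin m → Finset (ℕ → ℕ) → ℕ) (H : Fin m → Finset (ℕ → ℕ) → Finset ℕ)
    (p : Fin m → Ultrafilter ℕ) (hp : ∀ l F, chainSet (α l) (H l) F ∈ p l)
    (hA : ∀ G : ℕ → Finset (ℕ → ℕ),
        (∀ i, (G i).Nonempty) → (∀ i j, i < j → G i ⊂ G j) →
        ∀ f : ℕ → ℕ → ℕ, (∀ i, f i ∈ G i) →
        ∀ β : Fin m → Finset ℕ,
          (∀ l, (β l).Nonempty) →
          (∀ l l' : Fin m, l < l' → ∀ x ∈ β l, ∀ y ∈ β l', x < y) →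
          ∑ l : Fin m, a l * (∑ i ∈ β l, (α l (G i) + ∑ t ∈ H l (G i), f i t)) ∈ A) :
    A ∈ linComb m a p := by
  classical
  let Q : ℕ → ℕ → Prop := fun k s => ∃ (K : Finset (ℕ → ℕ)) (n : ℕ) (G : ℕ → Finset (ℕ → ℕ))
    (f : ℕ → ℕ → ℕ) (β : Fin m → Finset ℕ), IsChainTo n G f K ∧
      (∀ l : Fin m, (l : ℕ) < k → (β l).Nonempty) ∧ (∀ l : Fin m, k ≤ l → β l = ∅) ∧
      (∀ l, ∀ i ∈ β l, i < n) ∧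
      (∀ l l' : Fin m, l < l' → ∀ x ∈ β l, ∀ y ∈ β l', x < y) ∧
      s = ∑ l : Fin m, a l * ∑ i ∈ β l, term (α l) (H l) (G i) (f i)
  have main := linComb_of_step m a p Q ?_ 0 ?_
  · refine mem_of_superset main ?_
    rintro s ⟨K, n, G, f, β, hc, hne, -, hlt, hord, hs⟩
    rw [zero_add] at hs
    obtain ⟨G', f', hG', hf', hag⟩ := hc.exists_infinite
    have := hA G' (fun i => ⟨_, hf' i⟩) hG' f' hf' β (fun l => hne l l.2) hord
    rw [hs]
    convert this using 1
    refine Finset.sum_congr rfl fun l _ => ?_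
    congr 1
    refine Finset.sum_congr rfl fun i hi => ?_
    obtain ⟨e1, e2⟩ := hag i (hlt l i hi)
    rw [e1, e2, term]
  · rintro k s ⟨K, n, G, f, β, hc, hne, hemp, hlt, hord, hs⟩
    filter_upwards [hp k K] with x hx
    obtain ⟨K', hK'⟩ := hx
    obtain ⟨n', G', f', b, hn, hc', hag, hb, hb', hsum⟩ := hK'.exists_chain hc
    refine ⟨K', n', G', f', Function.update β k b, hc', ?_, ?_, ?_, ?_, ?_⟩
    · intro l hl
      by_cases h : l = k
      · subst h; simpa using hb
      · have : (l : ℕ) < k := by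
          have : (l : ℕ) ≠ k := fun h' => h (Fin.ext h')
          omega
        simpa [h] using hne l this
    · intro l hl
      have h : l ≠ k := by rintro rfl; omega
      simpa [h] using hemp l (by omega)
    · intro l i hi
      by_cases h : l = k
      · subst h; exact (hb' i (by simpa using hi)).2
      · exact (hlt l i (by simpa [h] using hi)).trans_le hn
    · intro l l' hll x hx y hy
      by_cases h : l = k
      · subst h
        have h' : l' ≠ l := hll.ne'
        have := hemp l' (le_of_lt hll)
        simp [h', this] at hy
      · by_cases h' : l' = k
        · subst h'
          have h1 := hlt l x (by simpa [h] using hx)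
          have h2 := (hb' y (by simpa using hy)).1
          omega
        · exact hord l l' hll x (by simpa [h] using hx) y (by simpa [h'] using hy)
    · rw [hs, ← Finset.add_sum_erase _ _ (Finset.mem_univ k),
        ← Finset.add_sum_erase (a := k) Finset.univ
          (fun l => a l * ∑ i ∈ Function.update β k b l, _) (Finset.mem_univ k), hemp k le_rfl]
      simp only [Function.update_self, Finset.sum_empty, mul_zero, zero_add, hsum]
      rw [add_comm]
      congr 1
      refine Finset.sum_congr rfl fun l hl => ?_
      have h : l ≠ k := Finset.ne_of_mem_erase hl
      rw [Function.update_of_ne h]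
      congr 1
      refine Finset.sum_congr rfl fun i hi => ?_
      obtain ⟨e1, e2⟩ := hag i (hlt l i hi)
      rw [e1, e2]
  · exact ⟨∅, 0, fun _ => ∅, fun _ _ => 0, fun _ => ∅, ⟨by simp, by simp, by simp⟩, by simp,
      by simp, by simp, by simp, by simp⟩

/-! ### From linear combinations to chains -/

/-- `s` is a good partial sum when the blocks in the list are still to come. -/
def Good (A : Set ℕ) : List (ℕ × Ultrafilter ℕ) → ℕ → Prop
  | [], s => s ∈ A
  | e :: L, s => ∀ᶠ x in (e.2 : Filter ℕ), Good A L (s + e.1 * x)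

theorem good_ofFn (m : ℕ) (a : Fin m → ℕ) (p : Fin m → Ultrafilter ℕ) (A : Set ℕ) (s : ℕ)
    (h : {x | s + x ∈ A} ∈ linComb m a p) :
    Good A (List.ofFn fun l => (a l, p l)) s := by
  induction m generalizing s with
  | zero => exact h
  | succ m ih =>
    rw [mem_linComb_succ] at h
    rw [List.ofFn_succ]
    refine h.mono fun x hx => ?_
    refine ih (fun i => a i.succ) (fun i => p i.succ) _ ?_
    simpa [add_assoc] using hx

theorem Good.step {A : Set ℕ} {e : ℕ × Ultrafilter ℕ} {L : List (ℕ × Ultrafilter ℕ)} {s : ℕ}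
    (he : IdempotentUF e.2) (h : Good A (e :: L) s) :
    ∀ᶠ y in (e.2 : Filter ℕ), Good A L (s + e.1 * y) ∧ Good A (e :: L) (s + e.1 * y) := by
  have h1 : {x | Good A L (s + e.1 * x)} ∈ e.2 := h
  have h2 := h1
  rw [← he, mem_uAdd] at h2
  filter_upwards [h1, h2] with y hy hy'
  refine ⟨hy, ?_⟩
  refine hy'.mono fun z hz => ?_
  have hz' : Good A L (s + e.1 * (y + z)) := hz
  rwa [mul_add, ← add_assoc] at hz'

theorem MemJ.exists_above {q : Ultrafilter ℕ} (hq : MemJ q) {C : Set ℕ} (hC : C ∈ q)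
    (F : Finset (ℕ → ℕ)) (N : ℕ) :
    ∃ v : ℕ × Finset ℕ, v.2.Nonempty ∧ (∀ y ∈ v.2, N ≤ y) ∧
      ∀ f ∈ F, v.1 + ∑ t ∈ v.2, f t ∈ C := by
  classical
  obtain ⟨a, β, hβ, h⟩ := hq C hC (insert (fun _ => 0) (F.image fun f t => f (t + N)))
    (Finset.insert_nonempty _ _)
  refine ⟨(a, β.image (· + N)), hβ.image _, ?_, fun f hf => ?_⟩
  · intro y hy
    obtain ⟨t, _, rfl⟩ := Finset.mem_image.1 hy
    exact Nat.le_add_left _ _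
  · have := h _ (Finset.mem_insert_of_mem (Finset.mem_image_of_mem (fun f t => f (t + N)) hf))
    rwa [Finset.sum_image (fun _ _ _ _ h => Nat.add_right_cancel h)]

/-- States: remaining blocks, and the partial sum so far. -/
abbrev State := List (ℕ × Ultrafilter ℕ) × ℕ

/-- Invariant of states. -/
def GoodState (A : Set ℕ) (t : State) : Prop :=
  Good A t.1 t.2 ∧ ∀ e ∈ t.1, IdempotentUF e.2 ∧ MemJ e.2

/-- Successor states of `t` when the function `f` is used. -/
def succStates (v : Ultrafilter ℕ → ℕ × Finset ℕ) (f : ℕ → ℕ) : State → Set State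
  | ([], _) => ∅
  | (e :: L, s) =>
    {(L, s + e.1 * ((v e.2).1 + ∑ i ∈ (v e.2).2, f i)),
      (e :: L, s + e.1 * ((v e.2).1 + ∑ i ∈ (v e.2).2, f i))}

theorem succStates_finite (v : Ultrafilter ℕ → ℕ × Finset ℕ) (f : ℕ → ℕ) (t : State) :
    (succStates v f t).Finite := by
  obtain ⟨_ | ⟨e, L⟩, s⟩ := t <;> simp [succStates]

/-- The requirement on the value chosen at `F` for the ultrafilter `q`. -/
def Spec (A : Set ℕ) (F : Finset (ℕ → ℕ)) (P : Set State) (B : Set ℕ) (q : Ultrafilter ℕ)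
    (v : ℕ × Finset ℕ) : Prop :=
  v.2.Nonempty ∧ (∀ x ∈ B, ∀ y ∈ v.2, x < y) ∧
    ∀ a L s, ((a, q) :: L, s) ∈ P → ∀ f ∈ F,
      Good A L (s + a * (v.1 + ∑ t ∈ v.2, f t)) ∧
      Good A ((a, q) :: L) (s + a * (v.1 + ∑ t ∈ v.2, f t))

theorem exists_spec {A : Set ℕ} (F : Finset (ℕ → ℕ)) {P : Set State} {B : Set ℕ}
    {q : Ultrafilter ℕ} (hq : IdempotentUF q) (hq' : MemJ q) (hP : P.Finite)
    (hPg : ∀ t ∈ P, GoodState A t) (hB : B.Finite) : ∃ v, Spec A F P B q v := by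
  have h1 : ∀ᶠ y in (q : Filter ℕ), ∀ t ∈ P, ∀ a L s, t = ((a, q) :: L, s) →
      Good A L (s + a * y) ∧ Good A ((a, q) :: L) (s + a * y) := by
    rw [Filter.eventually_all_finite hP]
    rintro ⟨L', s'⟩ ht
    by_cases hex : ∃ a L, L' = (a, q) :: L
    · obtain ⟨a, L, rfl⟩ := hex
      have := Good.step (e := (a, q)) hq (hPg _ ht).1
      filter_upwards [this] with y hy a' L'' s'' h
      simp only [Prod.mk.injEq, List.cons.injEq, and_true] at h
      obtain ⟨⟨rfl, rfl⟩, rfl⟩ := h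
      exact hy
    · refine Filter.Eventually.of_forall fun y a L s h => ?_
      exact (hex ⟨a, L, (Prod.mk.inj h).1⟩).elim
  obtain ⟨N, hN⟩ := hB.bddAbove
  obtain ⟨v, hv1, hv2, hv3⟩ := hq'.exists_above h1 F (N + 1)
  refine ⟨v, hv1, fun x hx y hy => ?_, fun a L s h f hf => hv3 f hf _ h a L s rfl⟩
  have := hN hx
  have := hv2 y hy
  omega

/-- The recursive construction: values and the new states arising at `F`. -/
noncomputable def build (A : Set ℕ) (L₀ : List (ℕ × Ultrafilter ℕ)) (F : Finset (ℕ → ℕ)) :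
    (Ultrafilter ℕ → ℕ × Finset ℕ) × Set State :=
  let P : Set State := {t | t = (L₀, 0) ∨ ∃ F', ∃ _h : F' ⊂ F, t ∈ (build A L₀ F').2}
  let v : Ultrafilter ℕ → ℕ × Finset ℕ := fun q => Classical.epsilon
    (Spec A F P {x | ∃ F', ∃ _h : F' ⊂ F, x ∈ ((build A L₀ F').1 q).2} q)
  (v, {u | ∃ t ∈ P, ∃ f ∈ F, u ∈ succStates v f t})
termination_by F.card
decreasing_by all_goals exact Finset.card_lt_card _h

/-- The states reached strictly below `F`. -/
def pool (A : Set ℕ) (L₀ : List (ℕ × Ultrafilter ℕ)) (F : Finset (ℕ → ℕ)) : Set State :=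
  {t | t = (L₀, 0) ∨ ∃ F₁, ∃ _h : F₁ ⊂ F, t ∈ (build A L₀ F₁).2}

/-- The points used strictly below `F`. -/
def used (A : Set ℕ) (L₀ : List (ℕ × Ultrafilter ℕ)) (F : Finset (ℕ → ℕ)) (q : Ultrafilter ℕ) :
    Set ℕ :=
  {x | ∃ F₁, ∃ _h : F₁ ⊂ F, x ∈ ((build A L₀ F₁).1 q).2}

theorem build_fst (A : Set ℕ) (L₀ : List (ℕ × Ultrafilter ℕ)) (F : Finset (ℕ → ℕ))
    (q : Ultrafilter ℕ) :
    (build A L₀ F).1 q = Classical.epsilon (Spec A F (pool A L₀ F) (used A L₀ F q) q) := by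
  rw [build]; rfl

theorem build_snd (A : Set ℕ) (L₀ : List (ℕ × Ultrafilter ℕ)) (F : Finset (ℕ → ℕ)) :
    (build A L₀ F).2 =
      {u | ∃ t ∈ pool A L₀ F, ∃ f ∈ F, u ∈ succStates (build A L₀ F).1 f t} := by
  conv_lhs => rw [build]
  have : (build A L₀ F).1 =
    fun q => Classical.epsilon (Spec A F (pool A L₀ F) (used A L₀ F q) q) :=
    funext (build_fst A L₀ F)
  rw [this]
  rfl

theorem used_finite (A : Set ℕ) (L₀ : List (ℕ × Ultrafilter ℕ)) (F : Finset (ℕ → ℕ))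
    (q : Ultrafilter ℕ) : (used A L₀ F q).Finite := by
  refine Set.Finite.subset (s := ⋃ F' ∈ (F.powerset : Set (Finset (ℕ → ℕ))),
    (((build A L₀ F').1 q).2 : Set ℕ)) ?_ ?_
  · exact Set.Finite.biUnion (Finset.finite_toSet _) fun _ _ => Finset.finite_toSet _
  · rintro x ⟨F', h, hx⟩
    simp only [Set.mem_iUnion]
    exact ⟨F', by simpa using h.subset, hx⟩

theorem pool_good_of {A : Set ℕ} {L₀ : List (ℕ × Ultrafilter ℕ)} (h₀ : GoodState A (L₀, 0))
    {F : Finset (ℕ → ℕ)}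
    (ih : ∀ F' ⊂ F, (build A L₀ F').2.Finite ∧ ∀ t ∈ (build A L₀ F').2, GoodState A t) :
    (pool A L₀ F).Finite ∧ ∀ t ∈ pool A L₀ F, GoodState A t := by
  constructor
  · refine Set.Finite.subset (s := {(L₀, 0)} ∪ ⋃ F' ∈ {F' : Finset (ℕ → ℕ) | F' ⊂ F},
      (build A L₀ F').2) ?_ ?_
    · refine (Set.finite_singleton _).union (Set.Finite.biUnion ?_ fun F' h => (ih F' h).1)
      refine (Finset.finite_toSet F.powerset).subset ?_
      intro F' h
      have h' : F' ⊂ F := h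
      simpa using h'.subset
    · rintro t (rfl | ⟨F', h, ht⟩)
      · exact Or.inl rfl
      · right
        simp only [Set.mem_iUnion]
        exact ⟨F', h, ht⟩
  · rintro t (rfl | ⟨F', h, ht⟩)
    · exact h₀
    · exact (ih F' h).2 t ht

theorem build_spec_of {A : Set ℕ} {L₀ : List (ℕ × Ultrafilter ℕ)}
    {F : Finset (ℕ → ℕ)}
    (h : (pool A L₀ F).Finite ∧ ∀ t ∈ pool A L₀ F, GoodState A t)
    {q : Ultrafilter ℕ} (hq : IdempotentUF q) (hq' : MemJ q) :
    Spec A F (pool A L₀ F) (used A L₀ F q) q ((build A L₀ F).1 q) := by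
  rw [build_fst]
  exact Classical.epsilon_spec (exists_spec F hq hq' h.1 h.2 (used_finite A L₀ F q))

theorem build_good {A : Set ℕ} {L₀ : List (ℕ × Ultrafilter ℕ)} (h₀ : GoodState A (L₀, 0))
    (F : Finset (ℕ → ℕ)) :
    (build A L₀ F).2.Finite ∧ ∀ t ∈ (build A L₀ F).2, GoodState A t := by
  induction F using Finset.strongInduction with
  | H F ih =>
    have hp := pool_good_of h₀ ih
    rw [build_snd]
    constructor
    · refine Set.Finite.subset (s := ⋃ t ∈ pool A L₀ F, ⋃ f ∈ (F : Set (ℕ → ℕ)),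
        succStates (build A L₀ F).1 f t) ?_ ?_
      · exact hp.1.biUnion fun t _ => (Finset.finite_toSet F).biUnion fun f _ =>
          succStates_finite _ _ _
      · rintro u ⟨t, ht, f, hf, hu⟩
        simp only [Set.mem_iUnion]
        exact ⟨t, ht, f, hf, hu⟩
    · rintro u ⟨⟨_ | ⟨e, L⟩, s⟩, ht, f, hf, hu⟩
      · exact hu.elim
      · have hg := hp.2 _ ht
        have hs := build_spec_of hp (hg.2 e (by simp)).1 (hg.2 e (by simp)).2
        have hs' := hs.2.2 e.1 L s ht f hf
        rcases hu with rfl | rfl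
        · exact ⟨hs'.1, fun e' he' => hg.2 e' (List.mem_cons_of_mem _ he')⟩
        · exact ⟨hs'.2, hg.2⟩

theorem build_spec {A : Set ℕ} {L₀ : List (ℕ × Ultrafilter ℕ)} (h₀ : GoodState A (L₀, 0))
    (F : Finset (ℕ → ℕ)) {q : Ultrafilter ℕ} (hq : IdempotentUF q) (hq' : MemJ q) :
    Spec A F (pool A L₀ F) (used A L₀ F q) q ((build A L₀ F).1 q) :=
  build_spec_of (pool_good_of h₀ fun F' _ => build_good h₀ F') hq hq'

theorem pool_mono (A : Set ℕ) (L₀ : List (ℕ × Ultrafilter ℕ)) {F G : Finset (ℕ → ℕ)}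
    (h : F ⊆ G) : pool A L₀ F ⊆ pool A L₀ G := by
  rintro t (ht | ⟨F', h', ht⟩)
  · exact Or.inl ht
  · exact Or.inr ⟨F', h'.trans_subset h, ht⟩

theorem block_step (A : Set ℕ) (L₀ : List (ℕ × Ultrafilter ℕ)) {G : ℕ → Finset (ℕ → ℕ)}
    (hG : ∀ i j, i < j → G i ⊂ G j) {f : ℕ → ℕ → ℕ} (hf : ∀ i, f i ∈ G i)
    (e : ℕ × Ultrafilter ℕ) (L : List (ℕ × Ultrafilter ℕ)) (s n : ℕ)
    (hs : (e :: L, s) ∈ pool A L₀ (G n)) (b : Finset ℕ) :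
    (∀ i ∈ b, n ≤ i) → ∀ M, n ≤ M → (∀ i ∈ b, i < M) →
    (e :: L, s + e.1 * ∑ i ∈ b, (((build A L₀ (G i)).1 e.2).1 +
      ∑ t ∈ ((build A L₀ (G i)).1 e.2).2, f i t)) ∈ pool A L₀ (G M) ∧
    (b.Nonempty → (L, s + e.1 * ∑ i ∈ b, (((build A L₀ (G i)).1 e.2).1 +
      ∑ t ∈ ((build A L₀ (G i)).1 e.2).2, f i t)) ∈ pool A L₀ (G M)) := by
  have hmono : ∀ i j, i ≤ j → G i ⊆ G j := fun i j h => by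
    rcases h.eq_or_lt with rfl | h
    · exact subset_rfl
    · exact (hG i j h).subset
  induction b using Finset.induction_on_max with
  | empty =>
    intro _ M hM _
    refine ⟨?_, by simp⟩
    simpa using pool_mono A L₀ (hmono n M hM) hs
  | insert x b hx ih =>
    intro hb M hM hbM
    have h1 := (ih (fun i hi => hb i (Finset.mem_insert_of_mem hi)) x
      (hb x (Finset.mem_insert_self _ _)) hx).1
    have hxb : x ∉ b := fun h => lt_irrefl _ (hx x h)
    have hxM := hbM x (Finset.mem_insert_self _ _)
    have h2 : ∀ u ∈ succStates (build A L₀ (G x)).1 (f x) (e :: L, s + e.1 *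
        ∑ i ∈ b, (((build A L₀ (G i)).1 e.2).1 + ∑ t ∈ ((build A L₀ (G i)).1 e.2).2, f i t)),
        u ∈ pool A L₀ (G M) := by
      intro u hu
      refine Or.inr ⟨G x, hG x M hxM, ?_⟩
      rw [build_snd]
      exact ⟨_, h1, f x, hf x, hu⟩
    rw [Finset.sum_insert hxb, add_comm (_ + _) (∑ i ∈ b, _), mul_add, ← add_assoc]
    exact ⟨h2 _ (Or.inr rfl), fun _ => h2 _ (Or.inl rfl)⟩

theorem blocks_mem {A : Set ℕ} {L₀ : List (ℕ × Ultrafilter ℕ)} (h₀ : GoodState A (L₀, 0))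
    {G : ℕ → Finset (ℕ → ℕ)}
    (hG : ∀ i j, i < j → G i ⊂ G j) {f : ℕ → ℕ → ℕ} (hf : ∀ i, f i ∈ G i)
    (m : ℕ) (a : Fin m → ℕ) (p : Fin m → Ultrafilter ℕ) (s n : ℕ)
    (hs : (List.ofFn fun l => (a l, p l), s) ∈ pool A L₀ (G n))
    (β : Fin m → Finset ℕ) (hne : ∀ l, (β l).Nonempty) (hn : ∀ l, ∀ i ∈ β l, n ≤ i)
    (hord : ∀ l l' : Fin m, l < l' → ∀ x ∈ β l, ∀ y ∈ β l', x < y) :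
    s + ∑ l : Fin m, a l * (∑ i ∈ β l, (((build A L₀ (G i)).1 (p l)).1 +
      ∑ t ∈ ((build A L₀ (G i)).1 (p l)).2, f i t)) ∈ A := by
  induction m generalizing s n with
  | zero =>
    have := ((pool_good_of h₀ fun F' _ => build_good h₀ F').2 _ hs).1
    simpa [Good] using this
  | succ m ih =>
    rw [List.ofFn_succ] at hs
    have hmax := Finset.max'_mem _ (hne 0)
    have h1 := (block_step A L₀ hG hf _ _ s n hs (β 0) (hn 0) ((β 0).max' (hne 0) + 1)
      ((hn 0 _ hmax).trans (Nat.le_succ _))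
      (fun i hi => Nat.lt_succ_of_le (Finset.le_max' _ i hi))).2 (hne 0)
    have h2 := ih (fun i => a i.succ) (fun i => p i.succ) _ _ h1 (fun i => β i.succ)
      (fun l => hne _) (fun l i hi => hord 0 l.succ (Fin.succ_pos l) _ hmax i hi)
      (fun l l' hl => hord _ _ (Fin.succ_lt_succ_iff.2 hl))
    rw [Fin.sum_univ_succ, ← add_assoc]
    exact h2

theorem chain_of_mem_linComb (m : ℕ) (a : Fin m → ℕ) (A : Set ℕ) (p : Fin m → Ultrafilter ℕ)
    (hp : ∀ l, IdempotentUF (p l)) (hp' : ∀ l, MemJ (p l)) (hA : A ∈ linComb m a p) :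
    ∃ v : Finset (ℕ → ℕ) → Ultrafilter ℕ → ℕ × Finset ℕ,
      (∀ l F, (v F (p l)).2.Nonempty) ∧
      (∀ l F G, F ⊂ G → ∀ x ∈ (v F (p l)).2, ∀ y ∈ (v G (p l)).2, x < y) ∧
      (∀ G : ℕ → Finset (ℕ → ℕ), (∀ i j, i < j → G i ⊂ G j) →
        ∀ f : ℕ → ℕ → ℕ, (∀ i, f i ∈ G i) →
        ∀ β : Fin m → Finset ℕ,
          (∀ l, (β l).Nonempty) →
          (∀ l l' : Fin m, l < l' → ∀ x ∈ β l, ∀ y ∈ β l', x < y) →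
          ∑ l : Fin m, a l * (∑ i ∈ β l, ((v (G i) (p l)).1 +
            ∑ t ∈ (v (G i) (p l)).2, f i t)) ∈ A) := by
  have h₀ : GoodState A (List.ofFn fun l => (a l, p l), 0) := by
    refine ⟨good_ofFn m a p A 0 (by simpa using hA), ?_⟩
    intro e he
    obtain ⟨l, rfl⟩ := (List.mem_ofFn' _ _).1 he
    exact ⟨hp l, hp' l⟩
  refine ⟨fun F => (build A (List.ofFn fun l => (a l, p l)) F).1, fun l F => ?_,
    fun l F G h x hx y hy => ?_, fun G hG f hf β hne hord => ?_⟩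
  · exact (build_spec h₀ F (hp l) (hp' l)).1
  · exact (build_spec h₀ G (hp l) (hp' l)).2.1 x ⟨F, h, hx⟩ y hy
  · have := blocks_mem h₀ hG hf m a p 0 0 (Or.inl rfl) β hne (fun _ _ _ => Nat.zero_le _) hord
    rwa [zero_add] at this

end Aux

/-- Characterization of the sets witnessing the linear-combination stronger central sets
theorem via (sums of multiples of) idempotents of 𝒥. -/
theorem linear_comb_characterization (m : ℕ) (hm : 1 ≤ m) (a : Fin m → ℕ) (A : Set ℕ) :
    ((∃ (α : Finset (ℕ → ℕ) → ℕ) (H : Finset (ℕ → ℕ) → Finset ℕ),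
      (∀ F : Finset (ℕ → ℕ), F.Nonempty → (H F).Nonempty) ∧
      (∀ F G : Finset (ℕ → ℕ), F.Nonempty → F ⊂ G →
        ∀ x ∈ H F, ∀ y ∈ H G, x < y) ∧
      (∀ G : ℕ → Finset (ℕ → ℕ),
        (∀ i, (G i).Nonempty) → (∀ i j, i < j → G i ⊂ G j) →
        ∀ f : ℕ → ℕ → ℕ, (∀ i, f i ∈ G i) →
        ∀ β : Fin m → Finset ℕ,
          (∀ l, (β l).Nonempty) →
          (∀ l l' : Fin m, l < l' → ∀ x ∈ β l, ∀ y ∈ β l', x < y) →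
          ∑ l : Fin m, a l * (∑ i ∈ β l, (α (G i) + ∑ t ∈ H (G i), f i t)) ∈ A))
      ↔
      (∃ p : Ultrafilter ℕ, IdempotentUF p ∧ MemJ p ∧ A ∈ linComb m a fun _ => p)) ∧
    ((∃ (α : Fin m → Finset (ℕ → ℕ) → ℕ) (H : Fin m → Finset (ℕ → ℕ) → Finset ℕ),
      (∀ (l : Fin m) (F : Finset (ℕ → ℕ)), F.Nonempty → (H l F).Nonempty) ∧
      (∀ (l : Fin m) (F G : Finset (ℕ → ℕ)), F.Nonempty → F ⊂ G →
        ∀ x ∈ H l F, ∀ y ∈ H l G, x < y) ∧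
      (∀ G : ℕ → Finset (ℕ → ℕ),
        (∀ i, (G i).Nonempty) → (∀ i j, i < j → G i ⊂ G j) →
        ∀ f : ℕ → ℕ → ℕ, (∀ i, f i ∈ G i) →
        ∀ β : Fin m → Finset ℕ,
          (∀ l, (β l).Nonempty) →
          (∀ l l' : Fin m, l < l' → ∀ x ∈ β l, ∀ y ∈ β l', x < y) →
          ∑ l : Fin m, a l * (∑ i ∈ β l, (α l (G i) + ∑ t ∈ H l (G i), f i t)) ∈ A))
      ↔
      (∃ p : Fin m → Ultrafilter ℕ,
        (∀ i, IdempotentUF (p i)) ∧ (∀ i, MemJ (p i)) ∧ A ∈ linComb m a p)) := by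
  refine ⟨⟨?_, ?_⟩, ⟨?_, ?_⟩⟩
  · rintro ⟨α, H, hH, -, h⟩
    obtain ⟨p, hp, hp', hT⟩ := exists_idempotent_chainSet (α := α) hH
    exact ⟨p, hp, hp', mem_linComb_of_chain m a A (fun _ => α) (fun _ => H) (fun _ => p)
      (fun _ => hT) h⟩
  · rintro ⟨p, hp, hp', hA⟩
    obtain ⟨v, h1, h2, h3⟩ := chain_of_mem_linComb m a A (fun _ => p) (fun _ => hp)
      (fun _ => hp') hA
    exact ⟨fun F => (v F p).1, fun F => (v F p).2, fun F _ => h1 ⟨0, hm⟩ F,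
      fun F G _ hFG => h2 ⟨0, hm⟩ F G hFG, fun G _ hG f hf β => h3 G hG f hf β⟩
  · rintro ⟨α, H, hH, -, h⟩
    have := fun l => exists_idempotent_chainSet (α := α l) (hH l)
    choose p hp hp' hT using this
    exact ⟨p, hp, hp', mem_linComb_of_chain m a A α H p hT h⟩
  · rintro ⟨p, hp, hp', hA⟩
    obtain ⟨v, h1, h2, h3⟩ := chain_of_mem_linComb m a A p hp hp' hA
    exact ⟨fun l F => (v F (p l)).1, fun l F => (v F (p l)).2, fun l F _ => h1 l F,
      fun l F G _ hFG => h2 l F G hFG, fun G _ hG f hf β => h3 G hG f hf β⟩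

end MultiCST
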